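/- arXiv:1302.1386 — 6 statements merged into one kernel-verified Lean document; each statement's English description precedes it below -/
import Mathlib

section
/- Let T be a tree rooted at r, and let V_1, V_2 ⊆ V(T) be disjoint sets of equal size such that V_1 and V_2 induce in T collections of vertex-disjoint paths 𝒫_1 and 𝒫_2 respectively, and there is a bijection between 𝒫_1 and 𝒫_2 mapping each path starting at a vertex v to a path of the same length starting at a sibling of v (a vertex with the same parent, hence at the same distance from r). If every pair of distinct paths in 𝒫_1 ∪ 𝒫_2 is independent, then V_1 and V_2 are homometric sets of T. -/
/-- The profile of a finite vertex set: the multiset of pairwise distances (in `G`)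
between (distinct) vertices of the set. -/
noncomputable def SimpleGraph.profile {V : Type*} [DecidableEq V] (G : SimpleGraph V)
    (s : Finset V) : Multiset ℕ :=
  s.offDiag.val.map fun p => G.dist p.1 p.2

/-- In the tree `G` rooted at `r`, the vertex `p` is the parent of `v`:
`p` is adjacent to `v` and one step closer to the root. -/
def SimpleGraph.IsParentOf {V : Type*} (G : SimpleGraph V) (r p v : V) : Prop :=
  G.Adj p v ∧ G.dist r p + 1 = G.dist r v

/-- In the tree `G` rooted at `r`, the vertices `u` and `v` are siblings:
they have a common parent (hence the same distance from the root). -/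
def SimpleGraph.AreSiblings {V : Type*} (G : SimpleGraph V) (r u v : V) : Prop :=
  ∃ p, G.IsParentOf r p u ∧ G.IsParentOf r p v

/-- A nonempty list of vertices forming a path in `G` (consecutive vertices
adjacent, no repetitions). -/
def SimpleGraph.IsPathList {V : Type*} (G : SimpleGraph V) (P : List V) : Prop :=
  P ≠ [] ∧ P.Chain' G.Adj ∧ P.Nodup

/-- In the tree `G` rooted at `r`, a vertex is a leaf if it has no children. -/
def SimpleGraph.IsRootedLeaf {V : Type*} (G : SimpleGraph V) (r v : V) : Prop :=
  ∀ w, ¬ G.IsParentOf r v w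

/-- A root-to-leaf path of the tree `G` rooted at `r`, given as a list of vertices. -/
def SimpleGraph.IsRootLeafPath {V : Type*} (G : SimpleGraph V) (r : V) (P : List V) : Prop :=
  G.IsPathList P ∧ P.head? = some r ∧ ∃ v, P.getLast? = some v ∧ G.IsRootedLeaf r v

/-- Two paths of the tree `G` rooted at `r` are independent if no root-to-leaf path
of `G` shares a vertex with both of them. -/
def SimpleGraph.IndependentPaths {V : Type*} (G : SimpleGraph V) (r : V)
    (P Q : List V) : Prop :=
  ¬ ∃ R : List V, G.IsRootLeafPath r R ∧ (∃ a ∈ R, a ∈ P) ∧ ∃ b ∈ R, b ∈ Q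

namespace PairingAux

open SimpleGraph

variable {V : Type*} {G : SimpleGraph V}

lemma length_eq_dist (hG : G.IsTree) {a b : V} (w : G.Walk a b) (hw : w.IsPath) :
    w.length = G.dist a b := by
  obtain ⟨q, hq, hq'⟩ := hG.connected.exists_path_of_dist a b
  have := (hG.existsUnique_path a b).unique hw hq
  rw [this, hq']

lemma dist_edge (hG : G.IsTree) {x y u p : V} (h : G.Adj u p)
    (hx : G.dist x p = G.dist x u + 1) (hy : G.dist y u = G.dist y p + 1) :
    G.dist x y = G.dist x u + 1 + G.dist p y := by
  obtain ⟨w1, hw1, hl1⟩ := hG.connected.exists_path_of_dist x u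
  obtain ⟨w2, hw2, hl2⟩ := hG.connected.exists_path_of_dist p y
  have h1 : (w1.append (Walk.cons h Walk.nil)).IsPath := by
    apply Walk.isPath_of_length_eq_dist
    simp [hl1, hx]
  have h2 : (Walk.cons h w2).IsPath := by
    apply Walk.isPath_of_length_eq_dist
    rw [Walk.length_cons, hl2, dist_comm, ← hy, dist_comm]
  have h3 : (w1.append (Walk.cons h w2)).IsPath := by
    rw [hG.isAcyclic.isPath_iff_isChain] at h1 h2 ⊢
    simp only [Walk.edges_append, Walk.edges_cons, Walk.edges_nil] at h1 h2 ⊢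
    exact List.isChain_split.2 ⟨h1, h2⟩
  have := length_eq_dist hG _ h3
  rw [← this, Walk.length_append, Walk.length_cons, hl1, hl2]
  omega

/-- `a` is an ancestor of `b`. -/
def Anc (G : SimpleGraph V) (r a b : V) : Prop := G.dist r a + G.dist a b = G.dist r b

lemma dist_sep (hG : G.IsTree) {r p u x y : V} (hp : G.IsParentOf r p u)
    (hx : Anc G r u x) (hy : ¬ Anc G r u y) :
    G.dist x y = G.dist x u + 1 + G.dist p y := by
  obtain ⟨hadj, hd⟩ := hp
  unfold Anc at *
  apply dist_edge hG hadj.symm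
  · rcases hG.dist_eq_dist_add_one_of_adj x hadj with h | h
    · exact h
    · have := hG.connected.dist_triangle (u := r) (v := p) (w := x)
      rw [dist_comm (u := u) (v := x)] at hx
      rw [dist_comm (u := p) (v := x)] at this
      omega
  · rcases hG.dist_eq_dist_add_one_of_adj y hadj with h | h
    · exfalso
      apply hy
      have := dist_edge hG hadj.symm h (y := r) hd.symm
      rw [dist_comm (u := y) (v := r), dist_comm (u := p) (v := r),
        dist_comm (u := y) (v := u)] at this
      omega
    · exact h

lemma not_indep [Fintype V] (hG : G.IsTree) {r a b : V} {P Q : List V} (h : Anc G r a b)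
    (ha : a ∈ P) (hb : b ∈ Q) : ¬ G.IndependentPaths r P Q := by
  classical
  intro hI
  apply hI
  have hne : (Finset.univ.filter (fun c => Anc G r b c)).Nonempty :=
    ⟨b, Finset.mem_filter.2 ⟨Finset.mem_univ _, by unfold Anc; simp⟩⟩
  obtain ⟨c, hc, hmax⟩ := Finset.exists_max_image _ (fun c => G.dist r c) hne
  simp only [Finset.mem_filter, Finset.mem_univ, true_and] at hc hmax
  unfold Anc at *
  obtain ⟨w1, hl1⟩ := hG.connected.exists_walk_length_eq_dist r a
  obtain ⟨w2, hl2⟩ := hG.connected.exists_walk_length_eq_dist a b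
  obtain ⟨w3, hl3⟩ := hG.connected.exists_walk_length_eq_dist b c
  have hw : (w1.append (w2.append w3)).IsPath := by
    apply Walk.isPath_of_length_eq_dist
    rw [Walk.length_append, Walk.length_append]
    omega
  refine ⟨(w1.append (w2.append w3)).support, ⟨⟨by simp, Walk.isChain_adj_support _,
    hw.support_nodup⟩, ?_, c, ?_, ?_⟩, ⟨a, ?_, ha⟩, b, ?_, hb⟩
  · rw [List.head?_eq_some_head (Walk.support_ne_nil _), Walk.head_support]
  · rw [List.getLast?_eq_some_getLast (Walk.support_ne_nil _), Walk.getLast_support]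
  · rintro w ⟨hadj, hd⟩
    have h1 := hG.connected.dist_triangle (u := b) (v := c) (w := w)
    have h2 := hG.connected.dist_triangle (u := r) (v := b) (w := w)
    rw [dist_eq_one_iff_adj.2 hadj] at h1
    have := hmax w (by omega)
    omega
  · simp [Walk.mem_support_append_iff]
  · simp [Walk.mem_support_append_iff]

lemma chain_dist (hG : G.IsTree) (P : List V) (hne : P ≠ []) (hc : P.IsChain G.Adj)
    (hn : P.Nodup) : G.dist (P.head hne) (P.getLast hne) = P.length - 1 := by
  rw [← length_eq_dist hG (Walk.ofSupport P hne hc), Walk.length_ofSupport]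
  rw [Walk.isPath_def, Walk.support_ofSupport]
  exact hn

lemma chain_dist_idx (hG : G.IsTree) (P : List V) (hc : P.IsChain G.Adj)
    (hn : P.Nodup) (k l : ℕ) (hkl : k ≤ l) (hl : l < P.length) :
    G.dist P[k] P[l] = l - k := by
  have hlen : ((P.take (l+1)).drop k).length = l + 1 - k := by
    rw [List.length_drop, List.length_take]; omega
  have hne : (P.take (l+1)).drop k ≠ [] := by
    intro h
    rw [h] at hlen
    simp at hlen
    omega
  have := chain_dist hG ((P.take (l+1)).drop k) hne ((hc.take _).drop _)
    ((hn.sublist (List.take_sublist _ _)).sublist (List.drop_sublist _ _))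
  rw [hlen] at this
  have e1 : ((P.take (l+1)).drop k).head hne = P[k] := by
    rw [List.head_eq_getElem]; simp
  have e2 : ((P.take (l+1)).drop k).getLast hne = P[l] := by
    rw [List.getLast_eq_getElem]
    simp only [List.getElem_drop, List.getElem_take, hlen]
    congr 1; omega
  rw [e1, e2] at this
  omega

/-- A path starting at a child `u` of `p` and avoiding `p` goes down. -/
lemma down (hG : G.IsTree) {r p u : V} {P : List V} (hP : G.IsPathList P)
    (hu : P.head? = some u) (hp : G.IsParentOf r p u) (hpP : p ∉ P) (k : ℕ)
    (hk : k < P.length) : Anc G r u P[k] ∧ G.dist P[k] u = k := by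
  obtain ⟨hne, hc, hn⟩ := hP
  replace hc : P.IsChain G.Adj := hc
  have h0 : P[0]'(by omega) = u := by
    rw [List.head?_eq_getElem?, List.getElem?_eq_getElem (by omega)] at hu
    simpa using hu
  have h1 := chain_dist_idx hG P hc hn 0 k (by omega) hk
  have hc' : (p :: P).IsChain G.Adj := by
    cases P with
    | nil => simp at hne
    | cons a l =>
      simp only [List.getElem_cons_zero] at h0
      subst h0
      exact List.isChain_cons_cons.2 ⟨hp.1, hc⟩
  have h2 := chain_dist_idx hG (p :: P) hc' (List.nodup_cons.2 ⟨hpP, hn⟩) 0 (k+1) (by omega)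
    (by simpa using hk)
  simp only [List.getElem_cons_zero, List.getElem_cons_succ] at h2
  rw [h0, dist_comm] at h1
  rw [dist_comm] at h2
  have h3 := dist_edge hG hp.1.symm (x := P[k]) (y := r) (by omega) hp.2.symm
  refine ⟨?_, by omega⟩
  unfold Anc
  have := hp.2
  rw [dist_comm (u := u), dist_comm (u := r) (v := P[k]), h3, dist_comm (u := p) (v := r)]
  omega

lemma profile_eq [DecidableEq V] {S : Type*} [Fintype S] [DecidableEq S] (f : S → V)
    (hf : Function.Injective f) (A : Finset V) (hA : ∀ x, x ∈ A ↔ ∃ s, f s = x) :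
    G.profile A = (Finset.univ : Finset S).offDiag.val.map
      (fun q => G.dist (f q.1) (f q.2)) := by
  have : A.offDiag = (Finset.univ : Finset S).offDiag.map
      ⟨Prod.map f f, hf.prodMap hf⟩ := by
    ext ⟨x, y⟩
    simp only [Finset.mem_offDiag, hA, Finset.mem_map, Finset.mem_univ, true_and,
      Function.Embedding.coeFn_mk, Prod.exists, Prod.map_apply, Prod.mk.injEq]
    constructor
    · rintro ⟨⟨s, rfl⟩, ⟨t, rfl⟩, h⟩
      exact ⟨s, t, fun e => h (by rw [e]), rfl, rfl⟩
    · rintro ⟨s, t, h, rfl, rfl⟩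
      exact ⟨⟨s, rfl⟩, ⟨t, rfl⟩, fun e => h (hf e)⟩
  unfold SimpleGraph.profile
  rw [this, Finset.map_val, Multiset.map_map]
  rfl

/-- Distance between vertices on two distinct independent downward paths. -/
lemma dist_two [Fintype V] (hG : G.IsTree) {r p u p' u' x y : V} {P Q : List V}
    (hp : G.IsParentOf r p u) (hp' : G.IsParentOf r p' u')
    (hu : u ∈ P) (hu' : u' ∈ Q) (hy : y ∈ Q)
    (hux : Anc G r u x) (huy : Anc G r u' y)
    (hI : G.IndependentPaths r P Q) (hI' : G.IndependentPaths r Q P) :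
    G.dist x y = G.dist x u + 1 + (G.dist y u' + 1 + G.dist p' p) := by
  rw [dist_sep hG hp hux (fun h => not_indep hG h hu hy hI), dist_comm (u := p) (v := y),
    dist_sep hG hp' huy]
  intro h
  refine not_indep hG (a := u') (b := u) ?_ hu' hu hI'
  unfold Anc at *
  have h1 := hG.connected.dist_triangle (u := u') (v := p) (w := u)
  have h2 := hG.connected.dist_triangle (u := r) (v := u') (w := u)
  rw [dist_eq_one_iff_adj.2 hp.1] at h1
  have := hp.2
  omega

end PairingAux

/-- Pairing lemma: let `G` be a tree rooted at `r`, and let `V₁, V₂` be disjoint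
equicardinal vertex sets inducing collections of vertex-disjoint paths
`P₁ i` (partitioning `V₁`) and `P₂ i` (partitioning `V₂`), indexed by the same finite
type `ι` (this encodes the bijection), such that for each `i` the paths `P₁ i` and
`P₂ i` have the same length and start at sibling vertices.  If every pair of distinct
paths of the collection `P₁ ∪ P₂` is independent, then `V₁` and `V₂` are homometric
sets of `G`. -/
theorem pairing_homometric {V : Type*} [Fintype V] [DecidableEq V]
    (G : SimpleGraph V) (hG : G.IsTree) (r : V)
    {ι : Type*} [Fintype ι] (P₁ P₂ : ι → List V) (V₁ V₂ : Finset V)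
    (hdisj : Disjoint V₁ V₂) (hcard : V₁.card = V₂.card)
    (hpath₁ : ∀ i, G.IsPathList (P₁ i)) (hpath₂ : ∀ i, G.IsPathList (P₂ i))
    (hpd₁ : ∀ i j, i ≠ j → ∀ x, x ∈ P₁ i → x ∉ P₁ j)
    (hpd₂ : ∀ i j, i ≠ j → ∀ x, x ∈ P₂ i → x ∉ P₂ j)
    (hV₁ : ∀ x, x ∈ V₁ ↔ ∃ i, x ∈ P₁ i)
    (hV₂ : ∀ x, x ∈ V₂ ↔ ∃ i, x ∈ P₂ i)
    (hlen : ∀ i, (P₁ i).length = (P₂ i).length)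
    (hsib : ∀ i, ∃ u v, (P₁ i).head? = some u ∧ (P₂ i).head? = some v ∧
      G.AreSiblings r u v)
    (hind₁ : ∀ i j, i ≠ j → G.IndependentPaths r (P₁ i) (P₁ j))
    (hind₂ : ∀ i j, i ≠ j → G.IndependentPaths r (P₂ i) (P₂ j))
    (hind₁₂ : ∀ i j, G.IndependentPaths r (P₁ i) (P₂ j)) :
    Disjoint V₁ V₂ ∧ G.profile V₁ = G.profile V₂ := by
  classical
  refine ⟨hdisj, ?_⟩
  choose u v hu hv p hpu hpv using hsib
  have hum : ∀ i, u i ∈ P₁ i := fun i => List.mem_of_mem_head? (by simp [hu i])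
  have hvm : ∀ i, v i ∈ P₂ i := fun i => List.mem_of_mem_head? (by simp [hv i])
  have hsymm : ∀ P Q, G.IndependentPaths r P Q → G.IndependentPaths r Q P := by
    rintro P Q h ⟨R, hR, ha, hb⟩
    exact h ⟨R, hR, hb, ha⟩
  have hanc : ∀ a b, G.IsParentOf r a b → PairingAux.Anc G r a b := by
    rintro a b ⟨hab, hd⟩
    unfold PairingAux.Anc
    rw [SimpleGraph.dist_eq_one_iff_adj.2 hab, hd]
  have hp1 : ∀ i, p i ∉ P₁ i := fun i h =>
    PairingAux.not_indep hG (hanc _ _ (hpv i)) h (hvm i) (hind₁₂ i i)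
  have hp2 : ∀ i, p i ∉ P₂ i := fun i h =>
    PairingAux.not_indep hG (hanc _ _ (hpu i)) h (hum i) (hsymm _ _ (hind₁₂ i i))
  have hd1 := fun i => PairingAux.down hG (hpath₁ i) (hu i) (hpu i) (hp1 i)
  have hd2 := fun i => PairingAux.down hG (hpath₂ i) (hv i) (hpv i) (hp2 i)
  let S := Σ i, Fin (P₁ i).length
  let f₁ : S → V := fun s => (P₁ s.1)[s.2.1]
  let f₂ : S → V := fun s => (P₂ s.1)[s.2.1]'(by rw [← hlen]; exact s.2.2)
  have hf₁ : Function.Injective f₁ := by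
    rintro ⟨i, k, hk⟩ ⟨j, l, hl⟩ h
    simp only [f₁] at h
    by_cases hij : i = j
    · subst hij
      have := (List.Nodup.getElem_inj_iff (hpath₁ i).2.2).1 h
      subst this
      rfl
    · exact absurd (h ▸ List.getElem_mem hl) (hpd₁ i j hij _ (List.getElem_mem hk))
  have hf₂ : Function.Injective f₂ := by
    rintro ⟨i, k, hk⟩ ⟨j, l, hl⟩ h
    simp only [f₂] at h
    by_cases hij : i = j
    · subst hij
      have := (List.Nodup.getElem_inj_iff (hpath₂ i).2.2).1 h
      subst this
      rfl
    · have hk' := hlen i ▸ hk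
      have hl' := hlen j ▸ hl
      exact absurd (h ▸ List.getElem_mem hl') (hpd₂ i j hij _ (List.getElem_mem hk'))
  rw [PairingAux.profile_eq f₁ hf₁ V₁, PairingAux.profile_eq f₂ hf₂ V₂]
  · apply Multiset.map_congr rfl
    rintro ⟨⟨i, k, hk⟩, ⟨j, l, hl⟩⟩ -
    simp only [f₁, f₂]
    have hk' := hlen i ▸ hk
    have hl' := hlen j ▸ hl
    by_cases hij : i = j
    · subst hij
      rcases le_total k l with hkl | hkl
      · rw [PairingAux.chain_dist_idx hG _ (hpath₁ i).2.1 (hpath₁ i).2.2 k l hkl hl,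
          PairingAux.chain_dist_idx hG _ (hpath₂ i).2.1 (hpath₂ i).2.2 k l hkl hl']
      · rw [SimpleGraph.dist_comm, SimpleGraph.dist_comm (u := (P₂ i)[k]),
          PairingAux.chain_dist_idx hG _ (hpath₁ i).2.1 (hpath₁ i).2.2 l k hkl hk,
          PairingAux.chain_dist_idx hG _ (hpath₂ i).2.1 (hpath₂ i).2.2 l k hkl hk']
    · rw [PairingAux.dist_two hG (hpu i) (hpu j) (hum i) (hum j) (List.getElem_mem hl)
          (hd1 i k hk).1 (hd1 j l hl).1 (hind₁ i j hij) (hind₁ j i (Ne.symm hij)),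
        PairingAux.dist_two hG (hpv i) (hpv j) (hvm i) (hvm j) (List.getElem_mem hl')
          (hd2 i k hk').1 (hd2 j l hl').1 (hind₂ i j hij) (hind₂ j i (Ne.symm hij)),
        (hd1 i k hk).2, (hd1 j l hl).2, (hd2 i k hk').2, (hd2 j l hl').2]
  · intro x
    rw [hV₂]
    constructor
    · rintro ⟨i, hx⟩
      obtain ⟨k, hk, rfl⟩ := List.getElem_of_mem hx
      exact ⟨⟨i, k, by rw [hlen]; exact hk⟩, rfl⟩
    · rintro ⟨s, rfl⟩
      exact ⟨s.1, List.getElem_mem _⟩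
  · intro x
    rw [hV₁]
    constructor
    · rintro ⟨i, hx⟩
      obtain ⟨k, hk, rfl⟩ := List.getElem_of_mem hx
      exact ⟨⟨i, k, hk⟩, rfl⟩
    · rintro ⟨s, rfl⟩
      exact ⟨s.1, List.getElem_mem _⟩
end

section
/- For every tree T = (V,E) rooted at a vertex r, f(T_r) ≥ |V| / (2·h(T_r)) − 1/2. -/
/-- Finite rooted trees: a node together with the list of subtrees of its children. -/
inductive RTree : Type where
  | node : List RTree → RTree

namespace RTree

/-- `h t` is the number of vertices on a longest path starting at the root
(so a single vertex has `h = 1`). -/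
def h : RTree → ℕ
  | node cs => 1 + (cs.attach.map fun c => h c.1).foldr max 0
decreasing_by simp only [node.sizeOf_spec]; have := List.sizeOf_lt_of_mem c.2; omega

/-- The number of vertices of a rooted tree. -/
def size : RTree → ℕ
  | node cs => 1 + (cs.attach.map fun c => size c.1).sum
decreasing_by simp only [node.sizeOf_spec]; have := List.sizeOf_lt_of_mem c.2; omega

/-- The pairing function `f`: `f t = 0` if `t` has at most one vertex; otherwise, with
the heights of the subtrees rooted at the children listed in non-increasing order
`g₁ ≥ g₂ ≥ …` (padding with the height-`0` empty tree to make the number of entries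
even, which does not change the sum below), `f t` is the maximum of `Σᵢ f(Tᵢ)` over all
children subtrees `Tᵢ`, and of `g₂ + g₄ + g₆ + …`. -/
def f : RTree → ℕ
  | node cs =>
    if cs.isEmpty then 0
    else
      let hs : List ℕ :=
        (((cs.attach.map fun c => h c.1 : List ℕ) : Multiset ℕ).sort (· ≤ ·)).reverse
      max ((cs.attach.map fun c => f c.1).sum)
        (∑ i ∈ Finset.range hs.length, if i % 2 = 1 then hs.getD i 0 else 0)
decreasing_by simp only [node.sizeOf_spec]; have := List.sizeOf_lt_of_mem c.2; omega

end RTree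

theorem pair_sum_bound : ∀ (l : List ℕ) (M : ℕ), l.Pairwise (fun a b => b ≤ a) →
    (∀ x ∈ l, x ≤ M) →
    l.sum ≤ M + 2 * ∑ i ∈ Finset.range l.length, (if i % 2 = 1 then l.getD i 0 else 0)
  | [], M, _, _ => by simp
  | [a], M, _, hM => by
      have := hM a (by simp)
      simpa using this
  | a :: b :: l, M, hp, hM => by
      have hp' := hp
      rw [List.pairwise_cons, List.pairwise_cons] at hp'
      have ih := pair_sum_bound l b hp'.2.2 hp'.2.1
      have ha := hM a (by simp)
      have key : ∑ i ∈ Finset.range (a :: b :: l).length,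
            (if i % 2 = 1 then (a :: b :: l).getD i 0 else 0) =
          b + ∑ i ∈ Finset.range l.length, (if i % 2 = 1 then l.getD i 0 else 0) := by
        rw [List.length_cons, List.length_cons, Finset.sum_range_succ', Finset.sum_range_succ']
        have : ∀ i, (i + 1 + 1) % 2 = i % 2 := by intro i; omega
        simp only [this, List.getD_cons_succ, List.getD_cons_zero]
        simp
        exact Nat.add_comm _ _
      rw [key]
      simp only [List.sum_cons]
      omega

theorem le_foldr_max : ∀ (l : List ℕ), ∀ x ∈ l, x ≤ l.foldr max 0
  | [], x, hx => by simp at hx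
  | a :: l, x, hx => by
      rcases List.mem_cons.1 hx with rfl | hx
      · simp
      · have := le_foldr_max l x hx
        simp [this]

theorem sum_size_bound (cs : List RTree) (H : ℕ) (hH : ∀ c ∈ cs, c.h ≤ H)
    (hi : ∀ c ∈ cs, c.size ≤ 2 * c.h * c.f + c.h) :
    (cs.map RTree.size).sum ≤ 2 * H * (cs.map RTree.f).sum + (cs.map RTree.h).sum := by
  induction cs with
  | nil => simp
  | cons c cs ih =>
    have h1 := ih (fun x hx => hH x (by simp [hx])) (fun x hx => hi x (by simp [hx]))
    have h2 := hi c (by simp)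
    have h3 : c.h * c.f ≤ H * c.f := Nat.mul_le_mul_right _ (hH c (by simp))
    simp only [List.map_cons, List.sum_cons]
    nlinarith

theorem size_le_nat : ∀ t : RTree, t.size ≤ 2 * t.h * t.f + t.h
  | .node cs => by
      have hi : ∀ c ∈ cs, c.size ≤ 2 * c.h * c.f + c.h := fun c hc => size_le_nat c
      rw [RTree.size, RTree.h, RTree.f]
      simp only [List.attach_map_val (f := RTree.size), List.attach_map_val (f := RTree.h),
        List.attach_map_val (f := RTree.f)]
      by_cases he : cs = []
      · subst he; simp
      · have hne : cs.isEmpty = false := by simpa using he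
        simp only [hne, Bool.false_eq_true, if_false]
        set H := (cs.map RTree.h).foldr max 0 with hHdef
        have hH : ∀ x ∈ cs.map RTree.h, x ≤ H := le_foldr_max _
        set hs := (((cs.map RTree.h : List ℕ) : Multiset ℕ).sort (· ≤ ·)).reverse with hhs
        have hperm : hs.Perm (cs.map RTree.h) := by
          rw [hhs]
          refine (List.reverse_perm _).trans ?_
          rw [← Multiset.coe_eq_coe, Multiset.sort_eq]
        have hp : hs.Pairwise (fun a b => b ≤ a) := by
          rw [hhs, List.pairwise_reverse]
          exact Multiset.pairwise_sort _ _
        have h1 := pair_sum_bound hs H hp (fun x hx => hH x (hperm.mem_iff.1 hx))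
        rw [hperm.sum_eq] at h1
        have h2 := sum_size_bound cs H (fun c hc => hH _ (List.mem_map_of_mem hc)) hi
        set S := ∑ i ∈ Finset.range hs.length, (if i % 2 = 1 then hs.getD i 0 else 0)
        set A := (cs.map RTree.f).sum
        have h3 : H * A ≤ H * max A S := Nat.mul_le_mul_left _ (le_max_left _ _)
        have h4 : S ≤ max A S := le_max_right _ _
        nlinarith
termination_by t => sizeOf t
decreasing_by
  simp only [RTree.node.sizeOf_spec]
  have := List.sizeOf_lt_of_mem hc
  omega

/-- For every rooted tree `T_r` on `|V|` vertices, `f(T_r) ≥ |V| / (2 h(T_r)) - 1/2`. -/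
theorem f_ge_size_div_two_h (t : RTree) :
    (t.size : ℝ) / (2 * t.h) - 1 / 2 ≤ (t.f : ℝ) := by
  have h1 := size_le_nat t
  have hpos : 0 < t.h := by
    cases t
    rw [RTree.h]
    omega
  have hp : (0 : ℝ) < t.h := by exact_mod_cast hpos
  have h2 : (t.size : ℝ) ≤ 2 * t.h * t.f + t.h := by exact_mod_cast h1
  rw [sub_le_iff_le_add, div_le_iff₀ (by positivity)]
  nlinarith
end

section
/- For every binary tree T = (V,E) rooted at a vertex r (i.e., every vertex of T_r has at most two children), f(T_r) ≥ |V| / h(T_r) − 1. -/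
namespace RTree

/-- A rooted tree is binary if every vertex has at most two children. -/
def IsBinary : RTree → Prop
  | node cs => cs.length ≤ 2 ∧ ∀ c ∈ cs, IsBinary c
decreasing_by simp only [node.sizeOf_spec]; have := List.sizeOf_lt_of_mem ‹c ∈ cs›; omega

end RTree

namespace RTree

theorem pair_sum_ge (a b : ℕ) (hs : List ℕ) (hp : hs.Perm [a, b]) :
    min a b ≤ ∑ i ∈ Finset.range hs.length, if i % 2 = 1 then hs.getD i 0 else 0 := by
  have hl : hs.length = 2 := by simpa using hp.length_eq
  obtain ⟨x, y, rfl⟩ := List.length_eq_two.1 hl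
  have hy : y ∈ [a, b] := hp.subset (by simp)
  simp only [List.mem_cons, List.not_mem_nil, or_false] at hy
  simp [Finset.sum_range_succ]
  omega

theorem size_le : (t : RTree) → t.IsBinary → t.size ≤ t.h * (t.f + 1)
  | node [], _ => by simp [size, h, f]
  | node [c], ht => by
    rw [IsBinary] at ht
    have ih := size_le c (ht.2 c (by simp))
    have hf : c.f ≤ (node [c]).f := by
      rw [f]; simp
    have hh : (node [c]).h = 1 + c.h := by rw [h]; simp
    have hz : (node [c]).size = 1 + c.size := by rw [size]; simp
    rw [hh, hz]
    nlinarith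
  | node [c, d], ht => by
    rw [IsBinary] at ht
    have ihc := size_le c (ht.2 c (by simp))
    have ihd := size_le d (ht.2 d (by simp))
    have hf : c.f + d.f ≤ (node [c, d]).f := by
      rw [f]; simp
    have hf2 : min c.h d.h ≤ (node [c, d]).f := by
      rw [f]
      simp only [List.isEmpty_cons, Bool.false_eq_true, if_false]
      refine le_trans (pair_sum_ge c.h d.h _ ?_) (le_max_right _ _)
      refine (List.reverse_perm _).trans ?_
      rw [← Multiset.coe_eq_coe, Multiset.sort_eq]
      simp
    have hh : (node [c, d]).h = 1 + max c.h d.h := by rw [h]; simp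
    have hz : (node [c, d]).size = 1 + (c.size + d.size) := by rw [size]; simp
    rw [hh, hz]
    generalize (node [c, d]).f = F at *
    rcases le_total c.h d.h with hcd | hcd
    · rw [max_eq_right hcd]
      rw [min_eq_left hcd] at hf2
      have h1 := Nat.mul_le_mul_left d.h hf
      have h2 := Nat.mul_le_mul_right c.f hcd
      nlinarith
    · rw [max_eq_left hcd]
      rw [min_eq_right hcd] at hf2
      have h1 := Nat.mul_le_mul_left c.h hf
      have h2 := Nat.mul_le_mul_right d.f hcd
      nlinarith
  | node (_ :: _ :: _ :: _), ht => by
    rw [IsBinary] at ht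
    have := ht.1
    simp at this
termination_by t => sizeOf t

end RTree

/-- For every binary rooted tree `T_r` on `|V|` vertices,
`f(T_r) ≥ |V| / h(T_r) - 1`. -/
theorem binary_f_ge_size_div_h (t : RTree) (ht : t.IsBinary) :
    (t.size : ℝ) / t.h - 1 ≤ (t.f : ℝ) := by
  have key := RTree.size_le t ht
  have hpos : 0 < t.h := by
    cases t
    rw [RTree.h]
    omega
  have hpos' : (0 : ℝ) < t.h := by exact_mod_cast hpos
  rw [sub_le_iff_le_add, div_le_iff₀ hpos', mul_comm]
  exact_mod_cast key
end

section
/- Every binary tree on n vertices (a rooted tree in which every vertex has at most two children) contains a pair of disjoint homometric sets each of size at least √n − 1. -/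
namespace HomTree

variable {V : Type*} {G : SimpleGraph V}

lemma geodesic (hc : G.Connected) (u v : V) :
    ∃ p : ℕ → V, p 0 = u ∧ p (G.dist u v) = v ∧
      ∀ i k, i + k ≤ G.dist u v → G.dist (p i) (p (i + k)) = k := by
  obtain ⟨w, hw⟩ := hc.exists_walk_length_eq_dist u v
  have h0 : w.getVert 0 = u := w.getVert_zero
  have h1 : w.getVert (G.dist u v) = v := by rw [← hw]; exact w.getVert_length
  have hle : ∀ i k, i + k ≤ G.dist u v → G.dist (w.getVert i) (w.getVert (i + k)) ≤ k := by
    intro i k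
    induction k with
    | zero => intro _; simp
    | succ k ih =>
      intro h
      have ha := w.adj_getVert_succ (i := i + k) (by omega)
      have hd := SimpleGraph.dist_eq_one_iff_adj.2 ha
      have ht := hc.dist_triangle (u := w.getVert i) (v := w.getVert (i + k))
        (w := w.getVert (i + k + 1))
      have := ih (by omega)
      rw [← Nat.add_assoc]
      omega
  refine ⟨w.getVert, h0, h1, fun i k h => ?_⟩
  refine le_antisymm (hle i k h) ?_
  have a1 := hle 0 i (by omega)
  have a2 := hle (i + k) (G.dist u v - (i + k)) (by omega)
  rw [Nat.zero_add, h0] at a1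
  rw [show i + k + (G.dist u v - (i + k)) = G.dist u v by omega, h1] at a2
  have t1 := hc.dist_triangle (u := u) (v := w.getVert i) (w := v)
  have t2 := hc.dist_triangle (u := w.getVert i) (v := w.getVert (i + k)) (w := v)
  omega

lemma dist_of_mem_support {u v y : V} (hc : G.Connected) (p : G.Walk u v)
    (hp : p.length = G.dist u v) (hy : y ∈ p.support) :
    G.dist u v = G.dist u y + G.dist y v := by
  classical
  have h := congrArg SimpleGraph.Walk.length (p.take_spec hy)
  rw [SimpleGraph.Walk.length_append] at h
  have h1 := SimpleGraph.dist_le (p.takeUntil y hy)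
  have h2 := SimpleGraph.dist_le (p.dropUntil y hy)
  have t1 := hc.dist_triangle (u := u) (v := y) (w := v)
  omega

/-- If crossing the edge `vw` moves away from `c` and towards `z`, it separates them. -/
lemma cross (hG : G.IsTree) {c v w z : V} (ha : G.Adj v w)
    (h1 : G.dist c w = G.dist c v + 1) (h2 : G.dist v z = G.dist w z + 1) :
    G.dist c z = G.dist c w + G.dist w z := by
  have hc := hG.connected
  obtain ⟨p, hpp, hp⟩ := hc.exists_path_of_dist c v
  obtain ⟨q, hqp, hq⟩ := hc.exists_path_of_dist w z
  have hdis : ∀ y, y ∈ p.support → y ∈ q.support → False := by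
    intro y hy hy'
    have e1 := dist_of_mem_support hc p hp hy
    have e2 := dist_of_mem_support hc q hq hy'
    have t1 := hc.dist_triangle (u := c) (v := y) (w := w)
    have t2 := hc.dist_triangle (u := v) (v := y) (w := z)
    have s1 := G.dist_comm (u := v) (v := y)
    have s2 := G.dist_comm (u := w) (v := y)
    omega
  have hpath : (p.append (q.cons ha)).IsPath := by
    rw [SimpleGraph.Walk.isPath_def, SimpleGraph.Walk.support_append]
    simp only [SimpleGraph.Walk.support_cons, List.tail_cons]
    rw [List.nodup_append']
    exact ⟨hpp.support_nodup, hqp.support_nodup, fun y h h' => hdis y h h'⟩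
  obtain ⟨g, hgp, hg⟩ := hc.exists_path_of_dist c z
  have := (hG.existsUnique_path c z).unique hgp hpath
  rw [this] at hg
  simp only [SimpleGraph.Walk.length_append, SimpleGraph.Walk.length_cons] at hg
  omega

/-- `x` lies below `v` when rooted at `c`. -/
def Below (G : SimpleGraph V) (c v x : V) : Prop := G.dist c x = G.dist c v + G.dist v x

lemma below_trans (hc : G.Connected) {c u v x : V} (h : Below G c u v) (h' : Below G c v x) :
    Below G c u x ∧ G.dist u x = G.dist u v + G.dist v x := by
  unfold Below at *
  have t1 := hc.dist_triangle (u := c) (v := u) (w := x)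
  have t2 := hc.dist_triangle (u := u) (v := v) (w := x)
  omega

lemma anc_unique (hG : G.IsTree) {c v v' x : V} (h : Below G c v x) (h' : Below G c v' x)
    (hl : G.dist c v = G.dist c v') : v = v' := by
  have hc := hG.connected
  have key : ∀ u, Below G c u x → ∀ p : G.Walk c x, p.IsPath → p.getVert (G.dist c u) = u := by
    intro u hu p hp
    obtain ⟨p1, h1⟩ := hc.exists_walk_length_eq_dist c u
    obtain ⟨p2, h2⟩ := hc.exists_walk_length_eq_dist u x
    have : (p1.append p2).IsPath := by
      apply SimpleGraph.Walk.isPath_of_length_eq_dist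
      rw [SimpleGraph.Walk.length_append, h1, h2, hu]
    rw [(hG.existsUnique_path c x).unique hp this, SimpleGraph.Walk.getVert_append, h1]
    simp
  obtain ⟨p, hp, -⟩ := hc.exists_path_of_dist c x
  rw [← key v h p hp, hl, key v' h' p hp]

lemma below_dist_half (hG : G.IsTree) {c v v' y : V} (hl : G.dist c v = G.dist c v')
    (hne : v ≠ v') (hy : Below G c v' y) :
    ∀ n x, Below G c v x → G.dist v x = n → G.dist x y = n + G.dist v y := by
  have hc := hG.connected
  intro n
  induction n with
  | zero =>
    intro x _ h
    rw [hc.dist_eq_zero_iff] at h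
    subst h; simp
  | succ n ih =>
    intro x hx hn
    obtain ⟨p, p0, p1, hp⟩ := geodesic hc v x
    rw [hn] at p1 hp
    have e1 := hp 0 n (by omega)
    have e2 := hp n 1 (by omega)
    rw [Nat.zero_add, p0] at e1
    rw [p1] at e2
    set x' := p n
    have ha : G.Adj x' x := SimpleGraph.dist_eq_one_iff_adj.1 e2
    have hx' : Below G c v x' := by
      unfold Below at *
      have t1 := hc.dist_triangle (u := c) (v := v) (w := x')
      have t2 := hc.dist_triangle (u := c) (v := x') (w := x)
      omega
    have hi := ih x' hx' e1
    have s1 := G.dist_comm (u := y) (v := x')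
    have s2 := G.dist_comm (u := y) (v := x)
    rcases hG.dist_eq_dist_add_one_of_adj y ha with h | h
    · exfalso
      have hb : Below G c x y := by
        unfold Below at *
        exact cross hG ha (by omega) (by omega)
      exact hne (anc_unique hG (below_trans hc hx hb).1 hy hl)
    · omega

lemma below_dist (hG : G.IsTree) {c v v' x y : V} (hl : G.dist c v = G.dist c v')
    (hne : v ≠ v') (hx : Below G c v x) (hy : Below G c v' y) :
    G.dist x y = G.dist v x + G.dist v v' + G.dist v' y := by
  have e1 := below_dist_half hG hl hne hy _ x hx rfl
  have e2 := below_dist_half hG hl.symm hne.symm (y := v) (by simp [Below]) _ y hy rfl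
  have s1 := G.dist_comm (u := y) (v := v)
  have s2 := G.dist_comm (u := v') (v := v)
  omega

/-- Homometric pair of size `k`. -/
def Q [DecidableEq V] (G : SimpleGraph V) (k : ℕ) : Prop :=
  ∃ A B : Finset V, Disjoint A B ∧ G.profile A = G.profile B ∧ A.card = B.card ∧ A.card = k

lemma mkQ [DecidableEq V] {ι : Type*} (hc : G.Connected) (I : Finset ι) (f g : ι → V)
    (hinj : ∀ x ∈ I, ∀ y ∈ I, G.dist (f x) (f y) = 0 → x = y)
    (hd : ∀ x ∈ I, ∀ y ∈ I, G.dist (f x) (f y) = G.dist (g x) (g y))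
    (hdis : ∀ x ∈ I, ∀ y ∈ I, f x ≠ g y) : Q G I.card := by
  classical
  have hf : Set.InjOn f I := fun x hx y hy h => hinj x hx y hy (by rw [h]; simp)
  have hg : Set.InjOn g I := fun x hx y hy h => hinj x hx y hy (by rw [hd x hx y hy, h]; simp)
  have hprof : ∀ f : ι → V, Set.InjOn f I →
      G.profile (I.image f) = I.offDiag.val.map fun p => G.dist (f p.1) (f p.2) := by
    intro f hf
    have : (I.image f).offDiag = I.offDiag.image (fun p => (f p.1, f p.2)) := by
      ext ⟨a, b⟩
      simp only [Finset.mem_offDiag, Finset.mem_image, Prod.exists, Prod.mk.injEq]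
      constructor
      · rintro ⟨⟨x, hx, rfl⟩, ⟨y, hy, rfl⟩, hne⟩
        exact ⟨x, y, ⟨hx, hy, fun h => hne (by rw [h])⟩, rfl, rfl⟩
      · rintro ⟨x, y, ⟨hx, hy, hne⟩, rfl, rfl⟩
        exact ⟨⟨x, hx, rfl⟩, ⟨y, hy, rfl⟩, fun h => hne (hf hx hy h)⟩
    unfold SimpleGraph.profile
    rw [this, Finset.image_val_of_injOn, Multiset.map_map]
    · rfl
    · rintro ⟨a, b⟩ h ⟨a', b'⟩ h' he
      simp only [Finset.coe_offDiag, Set.mem_offDiag, Finset.mem_coe] at h h'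
      simp only [Prod.mk.injEq] at he
      rw [hf h.1 h'.1 he.1, hf h.2.1 h'.2.1 he.2]
  refine ⟨I.image f, I.image g, ?_, ?_, ?_, ?_⟩
  · rw [Finset.disjoint_left]
    intro a ha hb
    rw [Finset.mem_image] at ha hb
    obtain ⟨x, hx, rfl⟩ := ha
    obtain ⟨y, hy, h⟩ := hb
    exact hdis x hx y hy h.symm
  · rw [hprof f hf, hprof g hg]
    apply Multiset.map_congr rfl
    rintro ⟨x, y⟩ h
    rw [Finset.mem_val, Finset.mem_offDiag] at h
    exact hd x h.1 y h.2.1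
  · rw [Finset.card_image_of_injOn hf, Finset.card_image_of_injOn hg]
  · rw [Finset.card_image_of_injOn hf]

lemma path_Q [DecidableEq V] (hc : G.Connected) (x y : V) (m : ℕ)
    (hm : 2 * m ≤ G.dist x y + 1) : Q G m := by
  obtain ⟨p, p0, p1, hp⟩ := geodesic hc x y
  have sym : ∀ i j, i ≤ G.dist x y → j ≤ G.dist x y →
      G.dist (p i) (p j) = (i - j) + (j - i) := by
    intro i j hi hj
    rcases le_total i j with h | h
    · have := hp i (j - i) (by omega)
      rw [show i + (j - i) = j by omega] at this
      omega
    · have := hp j (i - j) (by omega)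
      rw [show j + (i - j) = i by omega, G.dist_comm] at this
      omega
  have := mkQ hc (Finset.range m) p (fun i => p (m + i)) ?_ ?_ ?_
  · simpa using this
  · intro i hi j hj h
    rw [Finset.mem_range] at hi hj
    rw [sym i j (by omega) (by omega)] at h
    omega
  · intro i hi j hj
    rw [Finset.mem_range] at hi hj
    rw [sym i j (by omega) (by omega), sym _ _ (by omega) (by omega)]
    omega
  · intro i hi j hj h
    rw [Finset.mem_range] at hi hj
    have := sym i (m + j) (by omega) (by omega)
    rw [h, SimpleGraph.dist_self] at this
    omega

lemma exists_center [Finite V] (hG : G.IsTree) :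
    ∃ c x y : V, ∃ m, 2 * m ≤ G.dist x y + 1 ∧ ∀ z, G.dist c z ≤ m := by
  have hc := hG.connected
  have : Nonempty V := hc.nonempty
  obtain ⟨⟨x, y⟩, hmax⟩ := Finite.exists_max (fun p : V × V => G.dist p.1 p.2)
  replace hmax : ∀ a b, G.dist a b ≤ G.dist x y := fun a b => hmax (a, b)
  obtain ⟨p, p0, p1, hp⟩ := geodesic hc x y
  obtain ⟨m, hm, hm'⟩ : ∃ m, 2 * m ≤ G.dist x y + 1 ∧ G.dist x y ≤ 2 * m :=
    ⟨(G.dist x y + 1) / 2, by omega, by omega⟩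
  refine ⟨p m, x, y, m, hm, fun z => ?_⟩
  by_cases hmd : m ≤ G.dist x y
  swap
  · have := hmax (p m) z
    omega
  have e1 := hp 0 m (by omega)
  have e2 := hp m (G.dist x y - m) (by omega)
  rw [Nat.zero_add, p0] at e1
  rw [show m + (G.dist x y - m) = G.dist x y by omega, p1] at e2
  set c := p m
  by_cases hz : G.dist c z = 0
  · omega
  obtain ⟨q, q0, q1, hq⟩ := geodesic hc c z
  have f1 := hq 0 1 (by omega)
  have f2 := hq 1 (G.dist c z - 1) (by omega)
  rw [Nat.zero_add, q0] at f1
  rw [show 1 + (G.dist c z - 1) = G.dist c z by omega, q1] at f2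
  set w := q 1
  have ha : G.Adj c w := SimpleGraph.dist_eq_one_iff_adj.1 f1
  have s := G.dist_comm (u := c) (v := y)
  have s' := G.dist_comm (u := w) (v := y)
  have m1 := hmax x z
  have m2 := hmax y z
  have t := hc.dist_triangle (u := x) (v := w) (w := y)
  rcases hG.dist_eq_dist_add_one_of_adj x ha with h | h
  · rcases hG.dist_eq_dist_add_one_of_adj y ha with h' | h'
    · omega
    · have := cross hG ha h' (z := z) (by omega)
      omega
  · have := cross hG ha h (z := z) (by omega)
    omega

open Classical in
/-- Number of levels of the subtree below `v`. -/
noncomputable def ht [Fintype V] (G : SimpleGraph V) (c v : V) : ℕ :=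
  (Finset.univ.filter (Below G c v)).sup (G.dist v) + 1

lemma le_ht [Fintype V] {c v x : V} (h : Below G c v x) : G.dist v x + 1 ≤ ht G c v := by
  classical
  unfold ht
  have := Finset.le_sup (f := G.dist v) (s := Finset.univ.filter (Below G c v)) (b := x)
    (by simpa using h)
  convert Nat.succ_le_succ this

lemma exists_ht [Fintype V] (c v : V) : ∃ x, Below G c v x ∧ ht G c v = G.dist v x + 1 := by
  classical
  obtain ⟨x, hx, he⟩ := Finset.exists_mem_eq_sup (Finset.univ.filter (Below G c v))
    ⟨v, by simp [Below]⟩ (G.dist v)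
  refine ⟨x, by simpa using hx, ?_⟩
  unfold ht
  rw [← he]

lemma ht_child [Fintype V] (hc : G.Connected) {c v w : V} (ha : G.Adj v w)
    (hl : G.dist c w = G.dist c v + 1) : Below G c v w ∧ G.dist v w = 1 ∧
      ht G c w + 1 ≤ ht G c v := by
  have h1 := SimpleGraph.dist_eq_one_iff_adj.2 ha
  have hb : Below G c v w := by unfold Below; omega
  obtain ⟨x, hx, he⟩ := exists_ht (G := G) c w
  have h2 := below_trans hc hb hx
  have := le_ht h2.1
  exact ⟨hb, h1, by omega⟩

/-- descending path from `w` -/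
lemma down [Fintype V] (hc : G.Connected) (c w : V) :
    ∃ p : ℕ → V, ∀ i < ht G c w, Below G c w (p i) ∧ G.dist w (p i) = i ∧
      ∀ j < ht G c w, G.dist (p i) (p j) = (i - j) + (j - i) := by
  obtain ⟨x, hx, he⟩ := exists_ht (G := G) c w
  obtain ⟨p, p0, p1, hp⟩ := geodesic hc w x
  rw [he]
  refine ⟨p, fun i hi => ?_⟩
  have e1 := hp 0 i (by omega)
  have e2 := hp i (G.dist w x - i) (by omega)
  rw [Nat.zero_add, p0] at e1
  rw [show i + (G.dist w x - i) = G.dist w x by omega, p1] at e2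
  refine ⟨?_, e1, ?_⟩
  · unfold Below at *
    have t1 := hc.dist_triangle (u := c) (v := w) (w := p i)
    have t2 := hc.dist_triangle (u := c) (v := p i) (w := x)
    omega
  · intro j hj
    rcases le_total i j with h | h
    · have := hp i (j - i) (by omega)
      rw [show i + (j - i) = j by omega] at this
      omega
    · have := hp j (i - j) (by omega)
      rw [show j + (i - j) = i by omega, G.dist_comm] at this
      omega

/-- Two parallel descending paths of length `t` below `v`. -/
structure Fork (G : SimpleGraph V) (c v : V) (t : ℕ) (p q : ℕ → V) : Prop where
  bp : ∀ i < t, Below G c v (p i) ∧ G.dist v (p i) = i + 1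
  bq : ∀ i < t, Below G c v (q i) ∧ G.dist v (q i) = i + 1
  dp : ∀ i < t, ∀ j < t, G.dist (p i) (p j) = (i - j) + (j - i)
  dq : ∀ i < t, ∀ j < t, G.dist (q i) (q j) = (i - j) + (j - i)
  ne : ∀ i < t, ∀ j < t, p i ≠ q j

lemma exists_fork [Fintype V] (hG : G.IsTree) (c v : V) (C : Finset V)
    (hC : ∀ w ∈ C, G.Adj v w ∧ G.dist c w = G.dist c v + 1) (hcard : C.card ≤ 2) :
    ∃ t, ∃ p q : ℕ → V, Fork G c v t p q ∧ 1 + ∑ w ∈ C, ht G c w ≤ ht G c v + t := by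
  classical
  have hc := hG.connected
  have triv : Fork G c v 0 (fun _ => v) (fun _ => v) :=
    ⟨by simp, by simp, by simp, by simp, by simp⟩
  have h3 : C.card = 0 ∨ C.card = 1 ∨ C.card = 2 := by omega
  rcases h3 with h | h | h
  · rw [Finset.card_eq_zero] at h
    subst h
    refine ⟨0, _, _, triv, ?_⟩
    have := le_ht (G := G) (c := c) (v := v) (x := v) (by simp [Below])
    simp at this ⊢
    omega
  · obtain ⟨a, rfl⟩ := Finset.card_eq_one.1 h
    refine ⟨0, _, _, triv, ?_⟩
    have ha := hC a (by simp)
    have := (ht_child hc ha.1 ha.2).2.2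
    simp
    omega
  · obtain ⟨a, b, hab, rfl⟩ := Finset.card_eq_two.1 h
    have ha := hC a (by simp)
    have hb := hC b (by simp)
    obtain ⟨a1, a2, a3⟩ := ht_child hc ha.1 ha.2
    obtain ⟨b1, b2, b3⟩ := ht_child hc hb.1 hb.2
    obtain ⟨p, hp⟩ := down (G := G) hc c a
    obtain ⟨q, hq⟩ := down (G := G) hc c b
    have ep : ∀ i < min (ht G c a) (ht G c b), i < ht G c a := fun i hi => by omega
    have eq : ∀ i < min (ht G c a) (ht G c b), i < ht G c b := fun i hi => by omega
    refine ⟨min (ht G c a) (ht G c b), p, q, ⟨?_, ?_, ?_, ?_, ?_⟩, ?_⟩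
    · intro i hi
      obtain ⟨h1, h2, -⟩ := hp i (ep i hi)
      have := below_trans hc a1 h1
      exact ⟨this.1, by omega⟩
    · intro i hi
      obtain ⟨h1, h2, -⟩ := hq i (eq i hi)
      have := below_trans hc b1 h1
      exact ⟨this.1, by omega⟩
    · exact fun i hi j hj => (hp i (ep i hi)).2.2 j (ep j hj)
    · exact fun i hi j hj => (hq i (eq i hi)).2.2 j (eq j hj)
    · intro i hi j hj he
      have h1 := (hp i (ep i hi)).1
      have h2 := (hq j (eq j hj)).1
      rw [he] at h1
      exact hab (anc_unique hG h1 h2 (by omega))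
    · rw [Finset.sum_pair hab]
      omega

lemma fork_Q [DecidableEq V] (hG : G.IsTree) (c : V) (j : ℕ) (L : Finset V)
    (hL : ∀ v ∈ L, G.dist c v = j) (t : V → ℕ) (p q : V → ℕ → V)
    (hF : ∀ v ∈ L, Fork G c v (t v) (p v) (q v)) : Q G (∑ v ∈ L, t v) := by
  have hc := hG.connected
  have := mkQ hc (L.sigma fun v => Finset.range (t v)) (fun x => p x.1 x.2)
    (fun x => q x.1 x.2) ?_ ?_ ?_
  · simpa using this
  all_goals
    rintro ⟨v, i⟩ hx ⟨w, k⟩ hy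
    simp only [Finset.mem_sigma, Finset.mem_range] at hx hy
    obtain ⟨hv, hi⟩ := hx
    obtain ⟨hw, hk⟩ := hy
    by_cases hvw : v = w
  · subst hvw
    intro h
    simp only [(hF v hv).dp i hi k hk] at h
    rw [show i = k by omega]
  · intro h
    have hl : G.dist c v = G.dist c w := by rw [hL v hv, hL w hw]
    obtain ⟨h1, h2⟩ := (hF v hv).bp i hi
    obtain ⟨h3, h4⟩ := (hF w hw).bp k hk
    have := below_dist hG hl hvw h1 h3
    simp only at h
    omega
  · subst hvw
    simp only [(hF v hv).dp i hi k hk, (hF v hv).dq i hi k hk]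
  · have hl : G.dist c v = G.dist c w := by rw [hL v hv, hL w hw]
    obtain ⟨h1, h2⟩ := (hF v hv).bp i hi
    obtain ⟨h3, h4⟩ := (hF w hw).bp k hk
    obtain ⟨h5, h6⟩ := (hF v hv).bq i hi
    obtain ⟨h7, h8⟩ := (hF w hw).bq k hk
    have e1 := below_dist hG hl hvw h1 h3
    have e2 := below_dist hG hl hvw h5 h7
    simp only
    omega
  · subst hvw
    exact (hF v hv).ne i hi k hk
  · have hl : G.dist c v = G.dist c w := by rw [hL v hv, hL w hw]
    obtain ⟨h1, h2⟩ := (hF v hv).bp i hi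
    obtain ⟨h7, h8⟩ := (hF w hw).bq k hk
    have e1 := below_dist hG hl hvw h1 h7
    intro h
    simp only at h
    rw [h, SimpleGraph.dist_self] at e1
    omega

lemma exists_parent (hc : G.Connected) (c w : V) (j : ℕ) (hw : G.dist c w = j + 1) :
    ∃ v, G.Adj v w ∧ G.dist c v = j := by
  obtain ⟨p, p0, p1, hp⟩ := geodesic hc c w
  rw [hw] at p1 hp
  have e1 := hp 0 j (by omega)
  have e2 := hp j 1 (by omega)
  rw [Nat.zero_add, p0] at e1
  rw [p1] at e2
  exact ⟨p j, SimpleGraph.dist_eq_one_iff_adj.1 e2, e1⟩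

lemma parent_unique (hG : G.IsTree) {c w v v' : V} (ha : G.Adj v w) (ha' : G.Adj v' w)
    (h : G.dist c w = G.dist c v + 1) (h' : G.dist c w = G.dist c v' + 1) : v = v' := by
  have h1 := SimpleGraph.dist_eq_one_iff_adj.2 ha
  have h2 := SimpleGraph.dist_eq_one_iff_adj.2 ha'
  exact anc_unique hG (c := c) (x := w) (by unfold Below; omega) (by unfold Below; omega)
    (by omega)

/-- all degrees are at most three -/
lemma deg_le [Fintype V] (hG : G.IsTree) (r : V)
    (hbin : ∀ v : V, {w : V | G.IsParentOf r v w}.ncard ≤ 2) (v : V) (N : Finset V)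
    (hN : ∀ w ∈ N, G.Adj v w) : N.card ≤ 3 := by
  classical
  have h1 : (N.filter fun w => G.IsParentOf r v w).card ≤ 2 := by
    refine le_trans ?_ (hbin v)
    rw [← Set.ncard_coe_finset]
    apply Set.ncard_le_ncard _ (Set.toFinite _)
    intro w hw
    simp at hw
    exact hw.2
  have h2 : (N.filter fun w => ¬ G.IsParentOf r v w).card ≤ 1 := by
    rw [Finset.card_le_one]
    have key : ∀ w, w ∈ N.filter (fun w => ¬ G.IsParentOf r v w) →
        G.Adj w v ∧ G.dist r v = G.dist r w + 1 := by
      intro w hw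
      rw [Finset.mem_filter] at hw
      have ha := hN w hw.1
      refine ⟨ha.symm, ?_⟩
      rcases hG.dist_eq_dist_add_one_of_adj r ha with h | h
      · exact h
      · exact absurd ⟨ha, h.symm⟩ hw.2
    intro a ha b hb
    exact parent_unique hG (key a ha).1 (key b hb).1 (key a ha).2 (key b hb).2
  have := Finset.card_filter_add_card_filter_not (s := N) (fun w => G.IsParentOf r v w)
  omega

lemma children_le [Fintype V] (hG : G.IsTree) (r : V)
    (hbin : ∀ v : V, {w : V | G.IsParentOf r v w}.ncard ≤ 2) (c v : V) (hv : 1 ≤ G.dist c v)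
    (C : Finset V) (hC : ∀ w ∈ C, G.Adj v w ∧ G.dist c w = G.dist c v + 1) : C.card ≤ 2 := by
  classical
  obtain ⟨u, hu, hd⟩ := exists_parent hG.connected c v (G.dist c v - 1) (by omega)
  have hn : u ∉ C := by
    intro h
    have := (hC u h).2
    omega
  have := deg_le hG r hbin v (insert u C) (by
    intro w hw
    rw [Finset.mem_insert] at hw
    rcases hw with rfl | hw
    · exact hu.symm
    · exact (hC w hw).1)
  rw [Finset.card_insert_of_notMem hn] at this
  omega

/-- vertices at distance `j` from `c` -/
noncomputable def lev [Fintype V] (G : SimpleGraph V) (c : V) (j : ℕ) : Finset V :=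
  Finset.univ.filter fun v => G.dist c v = j

lemma mem_lev [Fintype V] {c v : V} {j : ℕ} : v ∈ lev G c j ↔ G.dist c v = j := by
  simp [lev]

lemma level_step [Fintype V] [DecidableEq V] (hG : G.IsTree) (r : V)
    (hbin : ∀ v : V, {w : V | G.IsParentOf r v w}.ncard ≤ 2) (c : V) (W : ℕ)
    (hW : ∀ k, Q G k → k ≤ W) (j : ℕ) (hj : 1 ≤ j) :
    (lev G c j).card + ∑ w ∈ lev G c (j + 1), ht G c w ≤ ∑ v ∈ lev G c j, ht G c v + W := by
  have hc := hG.connected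
  have hpar : ∀ w, ∃ v, w ∈ lev G c (j + 1) → G.Adj v w ∧ G.dist c v = j := by
    intro w
    by_cases h : w ∈ lev G c (j + 1)
    · obtain ⟨v, hv⟩ := exists_parent hc c w j (mem_lev.1 h)
      exact ⟨v, fun _ => hv⟩
    · exact ⟨w, fun h' => absurd h' h⟩
  choose par hpar using hpar
  let C : V → Finset V := fun v => (lev G c (j + 1)).filter fun w => par w = v
  have hC : ∀ v ∈ lev G c j, ∀ w ∈ C v, G.Adj v w ∧ G.dist c w = G.dist c v + 1 := by
    intro v hv w hw
    simp only [C, Finset.mem_filter] at hw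
    have := hpar w hw.1
    rw [hw.2] at this
    refine ⟨this.1, ?_⟩
    rw [mem_lev.1 hw.1, this.2]
  have hfork : ∀ v, ∃ t, ∃ p q : ℕ → V, v ∈ lev G c j →
      Fork G c v t p q ∧ 1 + ∑ w ∈ C v, ht G c w ≤ ht G c v + t := by
    intro v
    by_cases hv : v ∈ lev G c j
    · obtain ⟨t, p, q, h⟩ := exists_fork hG c v (C v) (hC v hv)
        (children_le hG r hbin c v (by rw [mem_lev.1 hv]; exact hj) _ (hC v hv))
      exact ⟨t, p, q, fun _ => h⟩
    · exact ⟨0, fun _ => v, fun _ => v, fun h => absurd h hv⟩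
  choose t p q hfork using hfork
  have hT : ∑ v ∈ lev G c j, t v ≤ W :=
    hW _ (fork_Q hG c j _ (fun v hv => mem_lev.1 hv) t p q fun v hv => (hfork v hv).1)
  have hsum : ∑ w ∈ lev G c (j + 1), ht G c w = ∑ v ∈ lev G c j, ∑ w ∈ C v, ht G c w :=
    (Finset.sum_fiberwise_of_maps_to (fun w hw => mem_lev.2 (hpar w hw).2) _).symm
  have := Finset.sum_le_sum fun v hv => (hfork v hv).2
  rw [Finset.sum_add_distrib, Finset.sum_add_distrib] at this
  simp only [Finset.sum_const, smul_eq_mul, mul_one] at this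
  omega

lemma count [Fintype V] [DecidableEq V] (hG : G.IsTree) (r : V)
    (hbin : ∀ v : V, {w : V | G.IsParentOf r v w}.ncard ≤ 2) (W : ℕ)
    (hW : ∀ k, Q G k → k ≤ W) : Fintype.card V ≤ (W + 1) ^ 2 := by
  have hc := hG.connected
  obtain ⟨c, x, y, m, hm, hecc⟩ := exists_center hG
  have hmW : m ≤ W := hW m (path_Q hc x y m hm)
  have tele : ∀ k, ∑ j ∈ Finset.range k, (lev G c (j + 1)).card +
      ∑ w ∈ lev G c (k + 1), ht G c w ≤ ∑ w ∈ lev G c 1, ht G c w + k * W := by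
    intro k
    induction k with
    | zero => simp
    | succ k ih =>
      have := level_step hG r hbin c W hW (k + 1) (by omega)
      rw [Finset.sum_range_succ, Nat.succ_mul]
      omega
  have hcard : Fintype.card V = ∑ j ∈ Finset.range (m + 1), (lev G c j).card := by
    rw [← Finset.card_univ]
    apply Finset.card_eq_sum_card_fiberwise
    intro v _
    simpa using Nat.lt_succ_of_le (hecc v)
  have hl0 : (lev G c 0).card = 1 := by
    rw [Finset.card_eq_one]
    refine ⟨c, ?_⟩
    ext v
    rw [mem_lev, hc.dist_eq_zero_iff, Finset.mem_singleton, eq_comm]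
  rw [Finset.sum_range_succ', hl0] at hcard
  rcases Nat.eq_zero_or_pos m with rfl | hpos
  · rw [hcard]
    simpa using Nat.one_le_pow _ _ (Nat.succ_pos W)
  obtain ⟨k, rfl⟩ : ∃ k, m = k + 1 := ⟨m - 1, by omega⟩
  have h1 := tele k
  have h2 : (lev G c (k + 1)).card ≤ ∑ w ∈ lev G c (k + 1), ht G c w := by
    rw [Finset.card_eq_sum_ones]
    exact Finset.sum_le_sum fun w _ => by unfold ht; omega
  have h3 : ∑ w ∈ lev G c 1, ht G c w ≤ 3 * (k + 1) := by
    have hle : ∀ w ∈ lev G c 1, ht G c w ≤ k + 1 := by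
      intro w hw
      obtain ⟨z, hz, he⟩ := exists_ht (G := G) c w
      have := hecc z
      have := mem_lev.1 hw
      unfold Below at hz
      omega
    refine (Finset.sum_le_card_nsmul _ _ _ hle).trans ?_
    rw [smul_eq_mul]
    apply Nat.mul_le_mul_right
    exact deg_le hG r hbin c _ fun w hw => SimpleGraph.dist_eq_one_iff_adj.1 (mem_lev.1 hw)
  rw [Finset.sum_range_succ] at hcard
  nlinarith

end HomTree

/-- Every binary tree on `n` vertices (a tree rooted at a vertex `r` in which every
vertex has at most two children) contains a pair of disjoint homometric sets, each of
size at least `√n - 1`. -/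
theorem binary_tree_homometric_sets {V : Type*} [Fintype V] [DecidableEq V]
    (G : SimpleGraph V) (hG : G.IsTree) (r : V)
    (hbin : ∀ v : V, {w : V | G.IsParentOf r v w}.ncard ≤ 2) :
    ∃ A B : Finset V, Disjoint A B ∧ G.profile A = G.profile B ∧ A.card = B.card ∧
      Real.sqrt (Fintype.card V) - 1 ≤ (A.card : ℝ) := by
  classical
  by_contra hcon
  push Not at hcon
  have hn : 0 < Fintype.card V := Fintype.card_pos_iff.2 ⟨r⟩
  have hlt : ∀ k, HomTree.Q G k → (k + 1) ^ 2 < Fintype.card V := by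
    rintro k ⟨A, B, h1, h2, h3, h4⟩
    have h := hcon A B h1 h2 h3
    rw [h4] at h
    have h' : ((k : ℝ) + 1) < Real.sqrt (Fintype.card V) := by linarith
    have := (Real.lt_sqrt (by positivity)).1 h'
    exact_mod_cast this
  have hW : ∀ k, HomTree.Q G k → k ≤ Nat.sqrt (Fintype.card V - 1) - 1 := by
    intro k hk
    have h := hlt k hk
    have : k + 1 ≤ Nat.sqrt (Fintype.card V - 1) := by
      rw [Nat.le_sqrt']
      omega
    omega
  have hQ0 : HomTree.Q G 0 := ⟨∅, ∅, by simp, rfl, rfl, rfl⟩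
  have h0 := hlt 0 hQ0
  have h1 := HomTree.count hG r hbin _ hW
  have hpos : 1 ≤ Nat.sqrt (Fintype.card V - 1) := by
    rw [Nat.le_sqrt']
    omega
  rw [Nat.sub_add_cancel hpos] at h1
  have := Nat.sqrt_le' (Fintype.card V - 1)
  omega
end

section
/- For the family of rooted binary trees R_i, f(R_i) = i − 1 for every i ≥ 1. -/
namespace RTree

/-- The binary trees `H i` (for `i ≥ 1`): `H 1` is a single vertex, and for `i ≥ 2`
the root of `H i` has two children, one a leaf and the other the root of a copy of
`H (i-1)`.  (The value at `0` is junk.) -/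
def Htree : ℕ → RTree
  | 0 => node []
  | 1 => node []
  | (n + 2) => node [node [], Htree (n + 1)]

/-- The binary trees `R i` (for `i ≥ 1`): `R 1` is a single vertex, and for `i ≥ 2`
the root of `R i` has two children, the root of a copy of `R (i-1)` and the root of a
copy of `H (i-1)`.  (The value at `0` is junk.) -/
def Rtree : ℕ → RTree
  | 0 => node []
  | 1 => node []
  | (n + 2) => node [Rtree (n + 1), Htree (n + 1)]

end RTree

namespace RTree

theorem sort_pair (a b : ℕ) (hab : a ≤ b) :
    (([a, b] : List ℕ) : Multiset ℕ).sort (· ≤ ·) = [a, b] := by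
  rw [Multiset.coe_sort]
  apply List.mergeSort_of_pairwise
  simpa using hab

theorem h_leaf : h (node []) = 1 := by
  rw [h]; simp

theorem f_leaf : f (node []) = 0 := by
  rw [f]; simp

theorem h_pair (s t : RTree) : h (node [s, t]) = 1 + max (h s) (h t) := by
  rw [h]; simp

theorem f_pair (s t : RTree) :
    f (node [s, t]) = max (f s + f t) (min (h s) (h t)) := by
  have key : (([h s, h t] : List ℕ) : Multiset ℕ).sort (· ≤ ·)
      = [min (h s) (h t), max (h s) (h t)] := by
    rcases le_total (h s) (h t) with hst | hst
    · rw [sort_pair _ _ hst, min_eq_left hst, max_eq_right hst]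
    · have hc : (([h s, h t] : List ℕ) : Multiset ℕ) = (([h t, h s] : List ℕ) : Multiset ℕ) :=
        Multiset.coe_eq_coe.mpr (List.Perm.swap _ _ _)
      rw [hc, sort_pair _ _ hst, min_eq_right hst, max_eq_left hst]
  have h1 : ([s, t].attach.map fun c => h c.1) = [h s, h t] := by simp
  have h2 : ([s, t].attach.map fun c => f c.1) = [f s, f t] := by simp
  rw [f, h1, h2, key]
  simp [Finset.sum_range_succ]

theorem h_Htree (n : ℕ) : h (Htree (n + 1)) = n + 1 := by
  induction n with
  | zero => rw [Htree, h_leaf]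
  | succ n ih => rw [Htree, h_pair, h_leaf, ih]; omega

theorem h_Rtree (n : ℕ) : h (Rtree (n + 1)) = n + 1 := by
  induction n with
  | zero => rw [Rtree, h_leaf]
  | succ n ih => rw [Rtree, h_pair, h_Htree, ih]; omega

theorem f_Htree (n : ℕ) : f (Htree (n + 1)) = min n 1 := by
  induction n with
  | zero => rw [Htree, f_leaf]; rfl
  | succ n ih => rw [Htree, f_pair, f_leaf, h_leaf, h_Htree, ih]; omega

theorem f_Rtree_succ (n : ℕ) : f (Rtree (n + 1)) = n := by
  induction n with
  | zero => rw [Rtree, f_leaf]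
  | succ n ih => rw [Rtree, f_pair, f_Htree, h_Htree, h_Rtree, ih]; omega

end RTree

/-- For the family of binary trees `R i`: `f (R i) = i - 1` for all `i ≥ 1`. -/
theorem f_Rtree : ∀ i : ℕ, 1 ≤ i → (RTree.Rtree i).f = i - 1 := by
  intro i hi
  obtain ⟨n, rfl⟩ : ∃ n, i = n + 1 := ⟨i - 1, by omega⟩
  rw [RTree.f_Rtree_succ]
  rfl
end

section
/- Every haircomb tree with spine on s vertices and longest leg on l vertices contains a pair of disjoint homometric sets each of size at least ⌊s/2⌋, and also a pair of disjoint homometric sets each of size at least ⌊l/2⌋. -/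
/-- The canonical haircomb graph with `m` legs, the `i`-th leg being a path on
`L i + 1` vertices `(i,0), (i,1), …, (i, L i)`.  The vertices `(i, 0)` form the spine:
consecutive spine vertices are adjacent. -/
def haircombGraph (m : ℕ) (L : Fin m → ℕ) : SimpleGraph (Σ i : Fin m, Fin (L i + 1)) :=
  SimpleGraph.fromRel fun a b =>
    (a.1 = b.1 ∧ (a.2 : ℕ) + 1 = (b.2 : ℕ)) ∨
    ((a.1 : ℕ) + 1 = (b.1 : ℕ) ∧ (a.2 : ℕ) = 0 ∧ (b.2 : ℕ) = 0)

theorem geodesic_aux {V : Type} (G : SimpleGraph V) (h : V → ℤ)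
    (hh : ∀ u v, G.Adj u v → |h u - h v| ≤ 1) {u v : V} (w : G.Walk u v) :
    |h u - h v| ≤ w.length := by
  induction w with
  | nil => simp
  | cons ha p ih =>
    have h1 := hh _ _ ha
    rw [SimpleGraph.Walk.length_cons]
    push_cast
    rw [abs_le] at *
    constructor <;> linarith [h1.1, h1.2, ih.1, ih.2]

theorem geodesic_walk {V : Type} (G : SimpleGraph V) (n : ℕ) (f : ℕ → V)
    (hf : ∀ k, k + 1 < n → G.Adj (f k) (f (k + 1))) (a d : ℕ) (hd : a + d < n) :
    ∃ w : G.Walk (f a) (f (a + d)), w.length = d := by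
  induction d with
  | zero => exact ⟨SimpleGraph.Walk.nil, rfl⟩
  | succ d ih =>
    obtain ⟨w, hw⟩ := ih (by omega)
    exact ⟨w.concat (hf (a + d) (by omega)), by simp [hw]⟩

theorem geodesic_dist {V : Type} (G : SimpleGraph V) (h : V → ℤ)
    (hh : ∀ u v, G.Adj u v → |h u - h v| ≤ 1) (n : ℕ) (f : ℕ → V)
    (hf : ∀ k, k + 1 < n → G.Adj (f k) (f (k + 1)))
    (hk : ∀ k, k < n → h (f k) = k) (a d : ℕ) (hd : a + d < n) :
    G.dist (f a) (f (a + d)) = d := by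
  obtain ⟨w, hw⟩ := geodesic_walk G n f hf a d hd
  apply le_antisymm
  · have := SimpleGraph.dist_le w
    omega
  · obtain ⟨p, hp⟩ := w.reachable.exists_walk_length_eq_dist
    have h1 := geodesic_aux G h hh p
    rw [hk a (by omega), hk _ hd, hp, abs_le] at h1
    have := h1.1
    push_cast at this
    omega

theorem geodesic_homometric {V : Type} [DecidableEq V] (G : SimpleGraph V) (h : V → ℤ)
    (hh : ∀ u v, G.Adj u v → |h u - h v| ≤ 1) (n : ℕ) (f : ℕ → V)
    (hf : ∀ k, k + 1 < n → G.Adj (f k) (f (k + 1)))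
    (hk : ∀ k, k < n → h (f k) = k) :
    ∃ A B : Finset V, Disjoint A B ∧ G.profile A = G.profile B ∧ A.card = B.card ∧
      n / 2 ≤ A.card := by
  have hinj : ∀ a b, a < n → b < n → f a = f b → a = b := by
    intro a b ha hb hab
    have h1 := hk a ha
    rw [hab, hk b hb] at h1
    exact_mod_cast h1.symm
  have hA : Set.InjOn f (Finset.range (n / 2) : Set ℕ) := by
    intro a ha b hb hab
    simp at ha hb
    exact hinj a b (by omega) (by omega) hab
  have hB : Set.InjOn (fun k => f (k + n / 2)) (Finset.range (n / 2) : Set ℕ) := by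
    intro a ha b hb hab
    simp at ha hb
    have := hinj _ _ (by omega) (by omega) hab
    omega
  have hdist := geodesic_dist G h hh n f hf hk
  have hsh : ∀ a b, a < n / 2 → b < n / 2 →
      G.dist (f a) (f b) = G.dist (f (a + n / 2)) (f (b + n / 2)) := by
    have key : ∀ a b, a ≤ b → b < n / 2 →
      G.dist (f a) (f b) = G.dist (f (a + n / 2)) (f (b + n / 2)) := by
      intro a b hab hb
      obtain ⟨d, rfl⟩ := Nat.exists_eq_add_of_le hab
      rw [hdist a d (by omega), show a + d + n / 2 = a + n / 2 + d by omega,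
        hdist _ d (by omega)]
    intro a b ha hb
    rcases le_total a b with hab | hab
    · exact key a b hab hb
    · rw [G.dist_comm, key b a hab ha, G.dist_comm]
  have hprof : ∀ g : ℕ → V, Set.InjOn g (Finset.range (n / 2) : Set ℕ) →
      G.profile ((Finset.range (n / 2)).image g) =
        (Finset.range (n / 2)).offDiag.val.map fun p => G.dist (g p.1) (g p.2) := by
    intro g hg
    have himg : ((Finset.range (n / 2)).image g).offDiag =
        (Finset.range (n / 2)).offDiag.image (Prod.map g g) := by
      ext ⟨x, y⟩
      simp only [Finset.mem_offDiag, Finset.mem_image, Prod.exists, Prod.map_apply,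
        Prod.mk.injEq]
      constructor
      · rintro ⟨⟨a, ha, rfl⟩, ⟨b, hb, rfl⟩, hne⟩
        exact ⟨a, b, ⟨ha, hb, fun e => hne (by rw [e])⟩, rfl, rfl⟩
      · rintro ⟨a, b, ⟨ha, hb, hne⟩, rfl, rfl⟩
        exact ⟨⟨a, ha, rfl⟩, ⟨b, hb, rfl⟩, fun e => hne (hg ha hb e)⟩
    unfold SimpleGraph.profile
    rw [himg, Finset.image_val_of_injOn, Multiset.map_map]
    · rfl
    · rintro ⟨a, b⟩ hab ⟨c, d⟩ hcd e
      simp only [Finset.mem_coe, Finset.mem_offDiag] at hab hcd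
      simp only [Prod.map_apply, Prod.mk.injEq] at e
      rw [hg hab.1 hcd.1 e.1, hg hab.2.1 hcd.2.1 e.2]
  refine ⟨(Finset.range (n / 2)).image f,
    (Finset.range (n / 2)).image (fun k => f (k + n / 2)), ?_, ?_, ?_, ?_⟩
  · rw [Finset.disjoint_left]
    intro x hx hy
    simp only [Finset.mem_image, Finset.mem_range] at hx hy
    obtain ⟨a, ha, rfl⟩ := hx
    obtain ⟨b, hb, e⟩ := hy
    have := hinj _ _ (by omega) (by omega) e
    omega
  · rw [hprof _ hA, hprof _ hB]
    apply Multiset.map_congr rfl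
    rintro ⟨a, b⟩ hab
    simp only [Finset.mem_val, Finset.mem_offDiag, Finset.mem_range] at hab
    exact hsh a b hab.1 hab.2.1
  · rw [Finset.card_image_of_injOn hA, Finset.card_image_of_injOn hB]
  · rw [Finset.card_image_of_injOn hA, Finset.card_range]

theorem haircomb_spine_lip (m : ℕ) (L : Fin m → ℕ) (a b : Σ i : Fin m, Fin (L i + 1))
    (hab : (haircombGraph m L).Adj a b) : |((a.1 : ℕ) : ℤ) - ((b.1 : ℕ) : ℤ)| ≤ 1 := by
  simp only [haircombGraph, SimpleGraph.fromRel_adj] at hab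
  rw [abs_le]
  obtain ⟨-, (⟨h1, h2⟩ | ⟨h1, h2, h3⟩) | (⟨h1, h2⟩ | ⟨h1, h2, h3⟩)⟩ := hab
  · rw [h1]; constructor <;> omega
  · constructor <;> omega
  · rw [h1]; constructor <;> omega
  · constructor <;> omega

/-- Height on leg `i`, zero on other legs. -/
def legHeight (m : ℕ) (L : Fin m → ℕ) (i : Fin m) (a : Σ i : Fin m, Fin (L i + 1)) : ℤ :=
  if a.1 = i then ((a.2 : ℕ) : ℤ) else 0

theorem haircomb_leg_lip (m : ℕ) (L : Fin m → ℕ) (i : Fin m) (a b : Σ i : Fin m, Fin (L i + 1))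
    (hab : (haircombGraph m L).Adj a b) : |legHeight m L i a - legHeight m L i b| ≤ 1 := by
  simp only [haircombGraph, SimpleGraph.fromRel_adj] at hab
  unfold legHeight
  rw [abs_le]
  obtain ⟨-, (⟨h1, h2⟩ | ⟨h1, h2, h3⟩) | (⟨h1, h2⟩ | ⟨h1, h2, h3⟩)⟩ := hab
  · simp only [h1]; split_ifs <;> constructor <;> omega
  · simp only [h2, h3]; split_ifs <;> simp
  · simp only [h1]; split_ifs <;> constructor <;> omega
  · simp only [h2, h3]; split_ifs <;> simp

/-- Every haircomb tree whose spine has `s` vertices and whose longest leg has `l`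
vertices contains a pair of disjoint homometric sets each of size at least `⌊s/2⌋`,
and also a pair of disjoint homometric sets each of size at least `⌊l/2⌋`. -/
theorem haircomb_spine_leg_homometric_sets
    {V : Type} [Fintype V] [DecidableEq V] (G : SimpleGraph V)
    (m : ℕ) (L : Fin m → ℕ) (φ : G ≃g haircombGraph m L)
    (s l : ℕ) (hs : s = m) (hl : l = Finset.univ.sup fun i : Fin m => L i + 1) :
    (∃ A B : Finset V, Disjoint A B ∧ G.profile A = G.profile B ∧ A.card = B.card ∧
      s / 2 ≤ A.card) ∧
    (∃ A B : Finset V, Disjoint A B ∧ G.profile A = G.profile B ∧ A.card = B.card ∧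
      l / 2 ≤ A.card) := by
  subst hs
  constructor
  · rcases Nat.eq_zero_or_pos s with h0 | h0
    · exact ⟨∅, ∅, by simp, rfl, rfl, by simp [h0]⟩
    refine geodesic_homometric G (fun v => ((φ v).1 : ℕ)) ?_ s
      (fun k => φ.symm ⟨⟨k % s, Nat.mod_lt _ h0⟩, 0⟩) ?_ ?_
    · exact fun u v huv => haircomb_spine_lip s L _ _ (φ.map_adj_iff.2 huv)
    · intro k hk
      rw [φ.symm.map_adj_iff]
      simp only [haircombGraph, SimpleGraph.fromRel_adj]
      have e1 : k % s = k := Nat.mod_eq_of_lt (by omega)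
      have e2 : (k + 1) % s = k + 1 := Nat.mod_eq_of_lt hk
      refine ⟨?_, Or.inl (Or.inr ⟨?_, rfl, rfl⟩)⟩
      · intro h
        have := congrArg (fun x => (x.1 : ℕ)) h
        simp only [e1, e2] at this
        omega
      · simp only [e1, e2]
    · intro k hk
      simp [Nat.mod_eq_of_lt hk]
  · rcases Nat.eq_zero_or_pos s with h0 | h0
    · subst h0
      exact ⟨∅, ∅, by simp, rfl, rfl, by simp [hl]⟩
    have : Nonempty (Fin s) := ⟨⟨0, h0⟩⟩
    obtain ⟨i, -, hi⟩ := Finset.exists_mem_eq_sup (Finset.univ : Finset (Fin s))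
      Finset.univ_nonempty (fun i : Fin s => L i + 1)
    rw [hi] at hl
    subst hl
    refine geodesic_homometric G (fun v => legHeight s L i (φ v)) ?_ _
      (fun k => φ.symm ⟨i, ⟨k % (L i + 1), Nat.mod_lt _ (by omega)⟩⟩) ?_ ?_
    · exact fun u v huv => haircomb_leg_lip s L i _ _ (φ.map_adj_iff.2 huv)
    · intro k hk
      rw [φ.symm.map_adj_iff]
      simp only [haircombGraph, SimpleGraph.fromRel_adj]
      have e1 : k % (L i + 1) = k := Nat.mod_eq_of_lt (by omega)
      have e2 : (k + 1) % (L i + 1) = k + 1 := Nat.mod_eq_of_lt hk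
      refine ⟨?_, Or.inl (Or.inl ⟨trivial, ?_⟩)⟩
      · intro h
        have := congrArg (fun x => (x.2 : ℕ)) h
        simp only [e1, e2] at this
        omega
      · simp only [e1, e2]
    · intro k hk
      rw [φ.apply_symm_apply]
      simp [legHeight, Nat.mod_eq_of_lt hk]
end
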